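/- Equivalent-points lower bound on classification loss: Let ι be a finite index set, α any type, x : ι → α the feature vectors and y : ι → Bool the labels of a dataset. Then for every classifier f : α → Bool, the number of misclassified observations, #{ i ∈ ι : f(x i) ≠ y i }, is at least Σ over distinct feature values v in the image of x of min( #{ i : x i = v and y i = true }, #{ i : x i = v and y i = false } ), i.e. the total number of minority-labeled points within the equivalence classes of identical feature vectors. -/

import Mathlib

/-- Equivalent-points lower bound on classification loss: any classifier must
misclassify at least the minority-labeled points within each equivalence class
of identical feature vectors. -/
theorem equivalent_points_lower_bound {ι α : Type*} [Fintype ι] [DecidableEq α]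
    (x : ι → α) (y : ι → Bool) (f : α → Bool) :
    ∑ v ∈ Finset.univ.image x,
        min ((Finset.univ.filter fun i => x i = v ∧ y i = true).card)
            ((Finset.univ.filter fun i => x i = v ∧ y i = false).card)
      ≤ (Finset.univ.filter fun i => f (x i) ≠ y i).card := by
  rw [Finset.card_eq_sum_card_fiberwise (f := x) (t := Finset.univ.image x)
    (fun i _ => by simp)]
  refine Finset.sum_le_sum fun v _ => ?_
  cases hv : f v
  · refine (min_le_left _ _).trans (Finset.card_le_card fun i hi => ?_)
    simp only [Finset.mem_filter, Finset.mem_univ, true_and] at hi ⊢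
    obtain ⟨h1, h2⟩ := hi
    refine ⟨?_, h1⟩
    rw [h1, hv, h2]
    decide
  · refine (min_le_right _ _).trans (Finset.card_le_card fun i hi => ?_)
    simp only [Finset.mem_filter, Finset.mem_univ, true_and] at hi ⊢
    obtain ⟨h1, h2⟩ := hi
    refine ⟨?_, h1⟩
    rw [h1, hv, h2]
    decide
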